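/- Let α be a homogeneous element of the exterior algebra Λ(E) of top degree n and β a homogeneous element of degree 2. Then for all f, g ∈ Dual ℝ E one has (ι_f ι_g α) * β = α * (ι_f ι_g β), where ι_f denotes left contraction by f. (This is the exchange identity for double contractions against a top-degree form, which justifies the paper's manipulation ι_ξ²α∧β = α∧ι_ξ²β.) -/

import Mathlib

noncomputable section

open ExteriorAlgebra

/-!
If `a * b = 0`, the antiderivation rule moves a contraction from `a` to `b` at the cost of a sign
and of the grade involution on `a`. A top-degree `α` annihilates everything of positive degree, so
for `β` of degree at least two this can be done twice. The two grade involutions cancel once the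
first is carried past `ι_g`, and the sign which this costs is restored by `ι_g ι_f = -ι_f ι_g`.
-/

section CliffordAlgebra

open CliffordAlgebra

variable {R M : Type*} [CommRing R] [AddCommGroup M] [Module R M] {Q : QuadraticForm R M}

theorem contractLeft_mul (d : Module.Dual R M) (a b : CliffordAlgebra Q) :
    contractLeft d (a * b) = contractLeft d a * b + involute a * contractLeft d b := by
  induction a using CliffordAlgebra.left_induction with
  | algebraMap r => simp [contractLeft_algebraMap_mul]
  | add x y hx hy => simp only [add_mul, map_add, hx, hy]; abel
  | ι_mul x v hx =>
    simp only [mul_assoc, contractLeft_ι_mul, hx, map_mul, involute_ι, mul_add, sub_mul,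
      smul_mul_assoc, neg_mul]
    abel

theorem involute_contractLeft (d : Module.Dual R M) (a : CliffordAlgebra Q) :
    involute (contractLeft d a) = -contractLeft d (involute a) := by
  induction a using CliffordAlgebra.left_induction with
  | algebraMap r => simp
  | add x y hx hy => simp only [map_add, hx, hy, neg_add]
  | ι_mul x v hx =>
    simp only [contractLeft_ι_mul, map_sub, map_smul, map_mul, map_neg, involute_ι, hx, neg_mul,
      mul_neg]
    abel

theorem contractLeft_mul_eq_neg_of_mul_eq_zero (d : Module.Dual R M) {a b : CliffordAlgebra Q}
    (hab : a * b = 0) :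
    contractLeft d a * b = -(involute a * contractLeft d b) := by
  rw [← add_eq_zero_iff_eq_neg, ← contractLeft_mul, hab, map_zero]

end CliffordAlgebra

section ExteriorAlgebra

open CliffordAlgebra (contractLeft involute)

variable {R M : Type*} [CommRing R] [AddCommGroup M] [Module R M]

theorem contractLeft_mem_exteriorPower (d : Module.Dual R M) {k : ℕ} {x : ExteriorAlgebra R M}
    (hx : x ∈ ⋀[R]^(k + 1) M) : contractLeft d x ∈ ⋀[R]^k M := by
  induction k generalizing x with
  | zero =>
    rw [zero_add, exteriorPower, pow_one] at hx
    obtain ⟨v, rfl⟩ := hx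
    rw [exteriorPower, pow_zero, ExteriorAlgebra.ι, CliffordAlgebra.contractLeft_ι]
    exact Submodule.algebraMap_mem _
  | succ k ih =>
    rw [exteriorPower, pow_succ'] at hx
    induction hx using Submodule.mul_induction_on' with
    | add x _ y _ hx hy => exact map_add (contractLeft d) x y ▸ add_mem hx hy
    | mem_mul_mem u hu y hy =>
      obtain ⟨v, rfl⟩ := hu
      rw [ExteriorAlgebra.ι, CliffordAlgebra.contractLeft_ι_mul]
      refine sub_mem (Submodule.smul_mem _ _ hy) ?_
      rw [exteriorPower, pow_succ']
      exact Submodule.mul_mem_mul ⟨v, rfl⟩ (ih hy)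

theorem mul_eq_zero_of_mem_exteriorPower_succ {a : ExteriorAlgebra R M}
    (ha : ∀ v, a * ι R v = 0) {k : ℕ} {x : ExteriorAlgebra R M} (hx : x ∈ ⋀[R]^(k + 1) M) :
    a * x = 0 := by
  rw [exteriorPower, pow_succ'] at hx
  induction hx using Submodule.mul_induction_on' with
  | add x _ y _ hx hy => rw [mul_add, hx, hy, add_zero]
  | mem_mul_mem u hu y _ =>
    obtain ⟨v, rfl⟩ := hu
    rw [← mul_assoc, ha, zero_mul]

theorem exteriorPower_eq_bot_of_span_eq_top {I : Type*} [Finite I] {v : I → M}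
    (hv : Submodule.span R (Set.range v) = ⊤) {k : ℕ} (hk : Nat.card I < k) :
    ⋀[R]^k M = ⊥ := by
  classical
  let : LinearOrder I := linearOrderOfSTO WellOrderingRel
  have : IsEmpty (Set.powersetCard I k) := by
    rw [← Finite.card_eq_zero_iff, Set.powersetCard.card, Nat.choose_eq_zero_of_lt hk]
  rw [← exteriorPower.ιMulti_family_span_fixedDegree_of_span R hv, Set.range_eq_empty,
    Submodule.span_empty]

theorem exteriorPower_eq_bot_of_finrank_lt [Module.Free R M] [Module.Finite R M] {k : ℕ}
    (hk : Module.finrank R M < k) : ⋀[R]^k M = ⊥ := by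
  nontriviality R
  exact exteriorPower_eq_bot_of_span_eq_top (Module.finBasis R M).span_eq (by rwa [Nat.card_fin])

theorem mul_ι_eq_zero_of_exteriorPower_succ_eq_bot {n : ℕ} (hn : ⋀[R]^(n + 1) M = ⊥)
    {a : ExteriorAlgebra R M} (ha : a ∈ ⋀[R]^n M) (v : M) : a * ι R v = 0 := by
  rw [← Submodule.mem_bot R, ← hn, exteriorPower, pow_succ]
  exact Submodule.mul_mem_mul ha ⟨v, rfl⟩

theorem contractLeft_double_exchange_general (f g : Module.Dual R M) {α β : ExteriorAlgebra R M}
    (hα : ∀ v, α * ι R v = 0) {k : ℕ} (hβ : β ∈ ⋀[R]^(k + 2) M) :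
    contractLeft f (contractLeft g α) * β = α * contractLeft f (contractLeft g β) := by
  have hfβ : contractLeft f β ∈ ⋀[R]^(k + 1) M := contractLeft_mem_exteriorPower f hβ
  have hgβ : contractLeft g β ∈ ⋀[R]^(k + 1) M := contractLeft_mem_exteriorPower g hβ
  have hα' : ∀ v, involute α * ι R v = 0 := fun v ↦ by simpa using congrArg involute (hα v)
  have hgαβ : contractLeft g α * β = 0 := by
    rw [contractLeft_mul_eq_neg_of_mul_eq_zero g (mul_eq_zero_of_mem_exteriorPower_succ hα hβ),
      mul_eq_zero_of_mem_exteriorPower_succ hα' hgβ, neg_zero]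
  calc contractLeft f (contractLeft g α) * β
      = -(involute (contractLeft g α) * contractLeft f β) :=
        contractLeft_mul_eq_neg_of_mul_eq_zero f hgαβ
    _ = contractLeft g (involute α) * contractLeft f β := by
        rw [involute_contractLeft, neg_mul, neg_neg]
    _ = -(involute (involute α) * contractLeft g (contractLeft f β)) :=
        contractLeft_mul_eq_neg_of_mul_eq_zero g (mul_eq_zero_of_mem_exteriorPower_succ hα' hfβ)
    _ = α * contractLeft f (contractLeft g β) := by
        rw [CliffordAlgebra.involute_involute, CliffordAlgebra.contractLeft_comm g f, mul_neg,
          neg_neg]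

end ExteriorAlgebra

/-- If `α` is homogeneous of top degree `n = dim E` and `β` is homogeneous of
degree `2`, then for all covectors `f, g`, `(ι_f ι_g α) * β = α * (ι_f ι_g β)`. -/
theorem contractLeft_double_exchange
    (E : Type) [AddCommGroup E] [Module ℝ E] [FiniteDimensional ℝ E]
    (f g : Module.Dual ℝ E) (α β : ExteriorAlgebra ℝ E)
    (hα : α ∈ ⋀[ℝ]^(Module.finrank ℝ E) E) (hβ : β ∈ ⋀[ℝ]^2 E) :
    CliffordAlgebra.contractLeft f (CliffordAlgebra.contractLeft g α) * β =
      α * CliffordAlgebra.contractLeft f (CliffordAlgebra.contractLeft g β) :=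
  contractLeft_double_exchange_general f g
    (mul_ι_eq_zero_of_exteriorPower_succ_eq_bot
      (exteriorPower_eq_bot_of_finrank_lt (Nat.lt_add_one _)) hα) hβ
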